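/- Suppose 𝔾 ⊆ 𝔾* ⊂ ℤ^d are nonempty symmetric index sets and let U_𝔾 and U_{𝔾*} be the Galerkin solutions of the source system in (V_𝔾)^N and (V_{𝔾*})^N respectively. Then: (i) the local upper bound ‖U_{𝔾*} − U_𝔾‖²_a ≤ (1/α_*) η̄²(U_𝔾; 𝔾*) holds; (ii) if ‖U − U_{𝔾*}‖²_a ≤ μ ‖U − U_𝔾‖²_a for some μ ∈ (0,1), where U is the exact solution, then 𝔾* satisfies the Dörfler condition η̄(U_𝔾; 𝔾*) ≥ θ η̄(U_𝔾) with θ = √((1−μ) α_*/α^*). -/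

import Mathlib

/-!
Since `V ∈ H_p^σ` with `σ > d/2` has summable Fourier coefficients, multiplication by `V` is a
bounded symmetric operator on `L_p²` (Young's inequality and Fubini). Hence `L` maps `H_p¹` to
`H_p^{-1}`, and `a` is a symmetric form with `α_* ‖v‖²_{H¹} ≤ a(v,v) ≤ α^* ‖v‖²_{H¹}`.

If `u` is a Galerkin solution in `V_𝔾`, then `a(u - w, v) = (Π_𝔾 r̄(w), v)` for `v ∈ V_𝔾`. For
`w ∈ V_𝔾`, testing with `v = u - w` and using coercivity bounds `‖u - w‖²_a` by `η̄²/α_*`. Testing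
with `v = (1 - Δ)⁻¹ Π_𝔾 r̄(w)`, the Riesz representative of the truncated residual, and using the
Cauchy–Schwarz inequality for `a` bounds `η̄²` by `α^* ‖u - w‖²_a`. The first bound is used on
`𝔾*`, the second on `ℤ^d`.

By Galerkin orthogonality `‖U - W‖²_a = ‖U - U_{𝔾*}‖²_a + ‖U_{𝔾*} - W‖²_a` for every
`W ∈ (V_{𝔾*})^N`, so an error reduction by `μ` makes the increment at least `(1 - μ) ‖U - W‖²_a`,
and the two bounds combine to the Dörfler condition.
-/

/-!
Common setup: periodic functions on `Ω = [0,2π)^d` are represented by their Fourier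
coefficients `u : (Fin d → ℤ) → ℂ` with respect to the orthonormal basis
`e_G(x) = (2π)^{-d/2} e^{iG·x}` of `L_p^2(Ω)`.
-/

open scoped BigOperators Pointwise Classical

noncomputable section

namespace APW

/-- Frequency indices `G ∈ ℤ^d`. -/
abbrev Idx (d : ℕ) := Fin d → ℤ

/-- A periodic function/distribution, represented by its Fourier coefficients
`û_G = (e_G, u)`. -/
abbrev Coeff (d : ℕ) := Idx d → ℂ

variable {d : ℕ}

/-- `|G|²`, the squared Euclidean norm of a frequency `G ∈ ℤ^d`. -/
def gnormSq (G : Idx d) : ℝ := ∑ i, ((G i : ℝ)) ^ 2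

/-- Squared `H_p^s(Ω)` norm: `Σ_G (1+|G|²)^s |û_G|²`. -/
def hsNormSq (s : ℝ) (u : Coeff d) : ℝ := ∑' G, (1 + gnormSq G) ^ s * ‖u G‖ ^ 2

/-- `H_p^s(Ω)` norm. -/
def hsNorm (s : ℝ) (u : Coeff d) : ℝ := Real.sqrt (hsNormSq s u)

/-- Membership in `H_p^s(Ω)` (real-valued periodic functions:
`û_{-G} = (û_G)^*` and the weighted coefficient series is summable). -/
def memHs (s : ℝ) (u : Coeff d) : Prop :=
  Summable (fun G : Idx d => (1 + gnormSq G) ^ s * ‖u G‖ ^ 2) ∧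
    ∀ G, u (-G) = starRingEnd ℂ (u G)

/-- The `L_p²(Ω)` inner product `(u,v) = Σ_G û_G^* v̂_G`. -/
def l2inner (u v : Coeff d) : ℂ := ∑' G, starRingEnd ℂ (u G) * v G

/-- Squared `L²` norm. -/
def l2NormSq (u : Coeff d) : ℝ := ∑' G, ‖u G‖ ^ 2

/-- `L²` norm. -/
def l2Norm (u : Coeff d) : ℝ := Real.sqrt (l2NormSq u)

/-- The `L²`-orthogonal projection `Π_𝔾` onto `V_𝔾` (truncation of Fourier coefficients). -/
def proj (𝔾 : Set (Idx d)) (u : Coeff d) : Coeff d := fun G => if G ∈ 𝔾 then u G else 0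

/-- The index set `𝔾^M = {G ∈ ℤ^d : |G| ≤ M}`. -/
def ball (d : ℕ) (M : ℝ) : Set (Idx d) := {G | Real.sqrt (gnormSq G) ≤ M}

/-- `V_𝔾 = span{e_G : G ∈ 𝔾}`: coefficient sequences supported in `𝔾`. -/
def pwSpace (𝔾 : Set (Idx d)) : Set (Coeff d) := {u | ∀ G, G ∉ 𝔾 → u G = 0}

/-- Fourier coefficients of the pointwise product `V·u` (a convolution). -/
def mulCoeff (V u : Coeff d) : Coeff d :=
  fun G => ((Real.sqrt ((2 * Real.pi) ^ d))⁻¹ : ℝ) * ∑' G', V (G - G') * u G'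

/-- The bilinear form `a(u,v) = (∇u,∇v) + (Vu,v)`, in Fourier coefficients. -/
def aForm (V u v : Coeff d) : ℂ :=
  (∑' G, (gnormSq G : ℂ) * starRingEnd ℂ (u G) * v G) + l2inner (mulCoeff V u) v

/-- The energy norm `‖u‖_a = √(a(u,u))`. -/
def aNorm (V u : Coeff d) : ℝ := Real.sqrt (aForm V u u).re

/-- The bounds `ν_* ≤ V ≤ ν^*` on the potential, encoded through the quadratic form
`(Vu, u)` of multiplication by `V`. -/
def PotentialBounds (V : Coeff d) (ν₁ ν₂ : ℝ) : Prop :=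
  ∀ u, memHs 0 u →
    ν₁ * l2NormSq u ≤ (l2inner (mulCoeff V u) u).re ∧
      (l2inner (mulCoeff V u) u).re ≤ ν₂ * l2NormSq u

/-- `K : L_p² → H_p¹` is the solution operator: `a(Kw, v) = (w, v)` for all `v ∈ H_p¹`. -/
def IsSolutionOp (V : Coeff d) (K : Coeff d → Coeff d) : Prop :=
  ∀ w, memHs 0 w →
    memHs 1 (K w) ∧ ∀ v, memHs 1 v → aForm V (K w) v = l2inner w v

/-- `P` is the Galerkin projection `P_𝔾 : H_p¹ → V_𝔾`:
`a(u − P_𝔾 u, v) = 0` for all `v ∈ V_𝔾`. -/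
def IsGalerkin (V : Coeff d) (𝔾 : Set (Idx d)) (P : Coeff d → Coeff d) : Prop :=
  ∀ u, memHs 1 u →
    P u ∈ pwSpace 𝔾 ∧ memHs 1 (P u) ∧
      ∀ v ∈ pwSpace 𝔾, memHs 1 v → aForm V (u - P u) v = 0

/-- `ρ_Ω(𝔾) = sup_{‖f‖_{L²}=1} inf_{v ∈ V_𝔾} ‖Kf − v‖_a`. -/
def rho (V : Coeff d) (K : Coeff d → Coeff d) (𝔾 : Set (Idx d)) : ℝ :=
  ⨆ f : {f : Coeff d // memHs 0 f ∧ l2Norm f = 1},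
    ⨅ v : pwSpace 𝔾, aNorm V (K f.1 - v.1)

/-- `ν(𝔾) = sup_{f ∈ H_p¹, ‖f‖_a=1} inf_{v ∈ V_𝔾} ‖Kf − v‖_a`. -/
def nuG (V : Coeff d) (K : Coeff d → Coeff d) (𝔾 : Set (Idx d)) : ℝ :=
  ⨆ f : {f : Coeff d // memHs 1 f ∧ aNorm V f = 1},
    ⨅ v : pwSpace 𝔾, aNorm V (K f.1 - v.1)

/-- The eigenspace `M(λ)` of the eigenvalue problem `a(u,v) = λ(u,v)`. -/
def eigenspace (V : Coeff d) (lam : ℝ) : Set (Coeff d) :=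
  {u | memHs 1 u ∧ ∀ v, memHs 1 v → aForm V u v = (lam : ℂ) * l2inner u v}

/-- `δ_𝔾(λ) = sup_{w ∈ M(λ), ‖w‖_a=1} inf_{v ∈ V_𝔾} ‖w − v‖_a`. -/
def deltaG (V : Coeff d) (𝔾 : Set (Idx d)) (lam : ℝ) : ℝ :=
  ⨆ w : {w : Coeff d // w ∈ eigenspace V lam ∧ aNorm V w = 1},
    ⨅ v : pwSpace 𝔾, aNorm V (w.1 - v.1)

/-- A discrete eigenpair of the planewave discretization in `V_𝔾`. -/
def IsDiscreteEigenpair (V : Coeff d) (𝔾 : Set (Idx d)) (lam : ℝ) (u : Coeff d) : Prop :=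
  u ∈ pwSpace 𝔾 ∧ memHs 1 u ∧
    ∀ v ∈ pwSpace 𝔾, memHs 1 v → aForm V u v = (lam : ℂ) * l2inner u v

/-- The spectral projection `E_𝔾(λ) = (2πi)^{-1}∮_Γ (z − K_𝔾)^{-1} dz` associated with
`K_𝔾` and the discrete invariant subspace `S = M_𝔾(λ)`, characterized algebraically:
a linear idempotent commuting with `K_𝔾` whose range is `S`. -/
def IsSpecProj (KG E : Coeff d → Coeff d) (S : Set (Coeff d)) : Prop :=
  (∀ u v, E (u + v) = E u + E v) ∧ (∀ (c : ℂ) (u), E (c • u) = c • E u) ∧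
    (∀ u, E (E u) = E u) ∧ (∀ u, E u ∈ S) ∧ (∀ u ∈ S, E u = u) ∧
      ∀ u, E (KG u) = KG (E u)

/-- Residual of an approximate eigenpair: `r(w) = λw + Δw − Vw`. -/
def residual (V : Coeff d) (lam : ℝ) (w : Coeff d) : Coeff d :=
  fun G => (lam : ℂ) * w G - (gnormSq G : ℂ) * w G - mulCoeff V w G

/-- Residual of the source problem: `r̄(w) = f − Lw = f + Δw − Vw`. -/
def rbar (V f w : Coeff d) : Coeff d :=
  fun G => f G - ((gnormSq G : ℂ) * w G + mulCoeff V w G)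

/-- A posteriori estimator `η(r; 𝔾*) = ‖Π_{𝔾*} r‖_{H_p^{-1}}`. -/
def eta (𝔾s : Set (Idx d)) (r : Coeff d) : ℝ := hsNorm (-1) (proj 𝔾s r)

/-- Energy norm of an `N`-tuple. -/
def aNormT {N : ℕ} (V : Coeff d) (U : Fin N → Coeff d) : ℝ :=
  Real.sqrt (∑ i, (aNorm V (U i)) ^ 2)

/-- The subspace distance `d_{H_p¹(Ω)}(X,Y) = sup_{u∈X,‖u‖_a=1} inf_{v∈Y} ‖u−v‖_a`. -/
def dSub (V : Coeff d) (X Y : Set (Coeff d)) : ℝ :=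
  ⨆ u : {u : Coeff d // u ∈ X ∧ aNorm V u = 1}, ⨅ v : Y, aNorm V (u.1 - v.1)

/-- The symmetric subspace distance `δ_{H_p¹(Ω)}(X,Y)`. -/
def deltaSub (V : Coeff d) (X Y : Set (Coeff d)) : ℝ :=
  max (dSub V X Y) (dSub V Y X)

/-! ### Square-summable sequences and convolution -/

section Sequences

variable {ι : Type*}

lemma summable_mul_of_summable_sq {a b : ι → ℝ} (ha : Summable fun i => a i ^ 2)
    (hb : Summable fun i => b i ^ 2) : Summable fun i => a i * b i := by
  refine .of_norm_bounded (ha.add hb) fun i => ?_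
  rw [Real.norm_eq_abs, abs_le]
  constructor <;> nlinarith [sq_nonneg (a i + b i), sq_nonneg (a i - b i)]

lemma sq_tsum_mul_le {a b : ι → ℝ} (ha : Summable fun i => a i ^ 2)
    (hb : Summable fun i => b i ^ 2) :
    (∑' i, a i * b i) ^ 2 ≤ (∑' i, a i ^ 2) * ∑' i, b i ^ 2 :=
  le_of_tendsto_of_tendsto' ((summable_mul_of_summable_sq ha hb).hasSum.pow 2)
    (Filter.Tendsto.mul ha.hasSum hb.hasSum) fun s => Finset.sum_mul_sq_le_sq_mul_sq s a b

lemma summable_mul_of_summable_mul_sq {w b : ι → ℝ} (hw₀ : ∀ i, 0 ≤ w i) (hw : Summable w)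
    (hwb : Summable fun i => w i * b i ^ 2) : Summable fun i => w i * b i := by
  have h := summable_mul_of_summable_sq (a := fun i => √(w i)) (b := fun i => √(w i) * b i)
    (by simpa only [Real.sq_sqrt (hw₀ _)] using hw)
    (by simpa only [mul_pow, Real.sq_sqrt (hw₀ _)] using hwb)
  simpa only [← mul_assoc, Real.mul_self_sqrt (hw₀ _)] using h

lemma sq_tsum_weight_mul_le {w b : ι → ℝ} (hw₀ : ∀ i, 0 ≤ w i) (hw : Summable w)
    (hwb : Summable fun i => w i * b i ^ 2) :
    (∑' i, w i * b i) ^ 2 ≤ (∑' i, w i) * ∑' i, w i * b i ^ 2 := by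
  have h := sq_tsum_mul_le (a := fun i => √(w i)) (b := fun i => √(w i) * b i)
    (by simpa only [Real.sq_sqrt (hw₀ _)] using hw)
    (by simpa only [mul_pow, Real.sq_sqrt (hw₀ _)] using hwb)
  simpa only [← mul_assoc, mul_pow, Real.mul_self_sqrt (hw₀ _), Real.sq_sqrt (hw₀ _)] using h

variable {A : Type*} [AddCommGroup A] {a b : A → ℝ}

lemma summable_convolution_kernel (ha : Summable a) (hb : Summable b) :
    Summable fun p : A × A => a (p.1 - p.2) * b p.2 :=
  ((Equiv.prodComm A A).trans ((Equiv.refl A).prodShear Equiv.subRight)).summable_iff.2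
    (summable_mul_of_summable_norm hb.norm ha.norm) |>.congr fun _ => mul_comm _ _

lemma summable_convolution (ha₀ : ∀ x, 0 ≤ a x) (ha : Summable a)
    (hb : Summable fun x => b x ^ 2) (x : A) : Summable fun y => a (x - y) * b y :=
  summable_mul_of_summable_mul_sq (fun _ => ha₀ _) ((Equiv.subLeft x).summable_iff.2 ha)
    ((summable_convolution_kernel ha hb).prod_factor x)

/-- Young's inequality `ℓ¹ * ℓ² ⊆ ℓ²`. -/
lemma summable_sq_convolution (ha₀ : ∀ x, 0 ≤ a x) (ha : Summable a)
    (hb : Summable fun x => b x ^ 2) : Summable fun x => (∑' y, a (x - y) * b y) ^ 2 := by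
  have hk := summable_convolution_kernel ha hb
  refine .of_nonneg_of_le (fun _ => sq_nonneg _) (fun x => ?_) (hk.prod.mul_left (∑' y, a y))
  have hx : Summable fun y => a (x - y) := (Equiv.subLeft x).summable_iff.2 ha
  have hsum : ∑' y, a (x - y) = ∑' y, a y := (Equiv.subLeft x).tsum_eq a
  simpa only [hsum] using sq_tsum_weight_mul_le (fun _ => ha₀ _) hx (hk.prod_factor x)

lemma summable_convolution_kernel_mul {c : A → ℝ} (ha₀ : ∀ x, 0 ≤ a x) (hb₀ : ∀ x, 0 ≤ b x)
    (hc₀ : ∀ x, 0 ≤ c x) (ha : Summable a) (hb : Summable fun x => b x ^ 2)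
    (hc : Summable fun x => c x ^ 2) :
    Summable fun p : A × A => a (p.1 - p.2) * b p.2 * c p.1 := by
  refine (summable_prod_of_nonneg fun p => mul_nonneg (mul_nonneg (ha₀ _) (hb₀ _)) (hc₀ _)).2
    ⟨fun x => (summable_convolution ha₀ ha hb x).mul_right (c x), ?_⟩
  simpa only [tsum_mul_right] using
    summable_mul_of_summable_sq (summable_sq_convolution ha₀ ha hb) hc

end Sequences

/-! ### Sobolev spaces of Fourier coefficients -/

lemma gnormSq_nonneg (G : Idx d) : 0 ≤ gnormSq G :=
  Finset.sum_nonneg fun _ _ => sq_nonneg _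

lemma gnormSq_neg (G : Idx d) : gnormSq (-G) = gnormSq G := by
  simp [gnormSq]

lemma one_add_gnormSq_pos (G : Idx d) : 0 < 1 + gnormSq G := by
  linarith [gnormSq_nonneg G]

/-- Finiteness of the `H_p^s` norm, for functions that need not be real-valued. -/
def FiniteHs (s : ℝ) (u : Coeff d) : Prop :=
  Summable fun G => (1 + gnormSq G) ^ s * ‖u G‖ ^ 2

/-- Real-valuedness of a periodic function, expressed as Hermitian symmetry of its Fourier
coefficients. -/
def IsRealValued (u : Coeff d) : Prop :=
  ∀ G, u (-G) = starRingEnd ℂ (u G)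

/-- The Bessel potential `(1 - Δ)^{s/2}`, an isometry of `H_p^{t+s}` onto `H_p^t`. -/
def bessel (s : ℝ) (u : Coeff d) : Coeff d :=
  fun G => ((1 + gnormSq G) ^ (s / 2) : ℝ) * u G

lemma finiteHs_zero_iff {u : Coeff d} : FiniteHs 0 u ↔ Summable fun G => ‖u G‖ ^ 2 := by
  simp only [FiniteHs, Real.rpow_zero, one_mul]

lemma FiniteHs.mono {s t : ℝ} {u : Coeff d} (hu : FiniteHs t u) (hst : s ≤ t) :
    FiniteHs s u := by
  refine .of_nonneg_of_le (fun G => ?_) (fun G => ?_) hu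
  · have := one_add_gnormSq_pos G
    positivity
  · gcongr
    linarith [gnormSq_nonneg G]

lemma memHs.mono {s t : ℝ} {u : Coeff d} (hu : memHs t u) (hst : s ≤ t) : memHs s u :=
  ⟨FiniteHs.mono hu.1 hst, hu.2⟩

lemma hsNormSq_nonneg (s : ℝ) (u : Coeff d) : 0 ≤ hsNormSq s u :=
  tsum_nonneg fun G => mul_nonneg (Real.rpow_nonneg (one_add_gnormSq_pos G).le _) (sq_nonneg _)

lemma hsNorm_sq (s : ℝ) (u : Coeff d) : hsNorm s u ^ 2 = hsNormSq s u :=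
  Real.sq_sqrt (hsNormSq_nonneg s u)

lemma rpow_mul_norm_bessel_sq (t s : ℝ) (u : Coeff d) (G : Idx d) :
    (1 + gnormSq G) ^ t * ‖bessel s u G‖ ^ 2 = (1 + gnormSq G) ^ (t + s) * ‖u G‖ ^ 2 := by
  have hp := one_add_gnormSq_pos G
  rw [bessel, norm_mul, Complex.norm_real, Real.norm_of_nonneg (by positivity), mul_pow,
    ← Real.rpow_mul_natCast hp.le, Nat.cast_two, div_mul_cancel₀ s two_ne_zero, ← mul_assoc,
    ← Real.rpow_add hp]

lemma norm_bessel_neg_mul_norm_bessel (s : ℝ) (u v : Coeff d) (G : Idx d) :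
    ‖bessel (-s) u G‖ * ‖bessel s v G‖ = ‖u G‖ * ‖v G‖ := by
  have hp := one_add_gnormSq_pos G
  rw [bessel, bessel, norm_mul, norm_mul, Complex.norm_real, Complex.norm_real,
    Real.norm_of_nonneg (by positivity), Real.norm_of_nonneg (by positivity), neg_div,
    Real.rpow_neg hp.le]
  field_simp

lemma finiteHs_bessel {t s : ℝ} {u : Coeff d} : FiniteHs t (bessel s u) ↔ FiniteHs (t + s) u := by
  simp only [FiniteHs, rpow_mul_norm_bessel_sq]

lemma hsNormSq_bessel (t s : ℝ) (u : Coeff d) :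
    hsNormSq t (bessel s u) = hsNormSq (t + s) u := by
  simp only [hsNormSq, rpow_mul_norm_bessel_sq]

lemma finiteHs_iff_summable_sq_bessel {s : ℝ} {u : Coeff d} :
    FiniteHs s u ↔ Summable fun G => ‖bessel s u G‖ ^ 2 := by
  rw [← finiteHs_zero_iff, finiteHs_bessel, zero_add]

lemma hsNormSq_eq_tsum_sq_bessel (s : ℝ) (u : Coeff d) :
    hsNormSq s u = ∑' G, ‖bessel s u G‖ ^ 2 := by
  rw [← zero_add s, ← hsNormSq_bessel]
  simp only [hsNormSq, Real.rpow_zero, one_mul, zero_add]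

lemma IsRealValued.bessel {u : Coeff d} (hu : IsRealValued u) (s : ℝ) :
    IsRealValued (bessel s u) := fun G => by
  simp only [APW.bessel, gnormSq_neg, hu G, map_mul, Complex.conj_ofReal]

lemma FiniteHs.add {s : ℝ} {u v : Coeff d} (hu : FiniteHs s u) (hv : FiniteHs s v) :
    FiniteHs s (u + v) := by
  refine .of_nonneg_of_le (fun G => ?_) (fun G => ?_) ((Summable.add hu hv).mul_left 2)
  · have := one_add_gnormSq_pos G
    positivity
  · have := one_add_gnormSq_pos G
    calc (1 + gnormSq G) ^ s * ‖u G + v G‖ ^ 2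
        ≤ (1 + gnormSq G) ^ s * (2 * (‖u G‖ ^ 2 + ‖v G‖ ^ 2)) := by
          gcongr
          exact (pow_le_pow_left₀ (norm_nonneg _) (norm_add_le _ _) 2).trans add_sq_le
      _ = _ := by ring

lemma FiniteHs.smul {s : ℝ} {u : Coeff d} (hu : FiniteHs s u) (c : ℝ) : FiniteHs s (c • u) :=
  (Summable.mul_left (‖c‖ ^ 2) hu).congr fun G => by
    rw [Pi.smul_apply, norm_smul]
    ring

lemma FiniteHs.sub {s : ℝ} {u v : Coeff d} (hu : FiniteHs s u) (hv : FiniteHs s v) :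
    FiniteHs s (u - v) := by
  simpa only [neg_one_smul, ← sub_eq_add_neg] using hu.add (hv.smul (-1))

/-- `H_p^s(Ω)` as a real vector space. -/
def sobolevSpace (d : ℕ) (s : ℝ) : Submodule ℝ (Coeff d) where
  carrier := {u | memHs s u}
  add_mem' hu hv := ⟨FiniteHs.add hu.1 hv.1, fun G => by simp [hu.2 G, hv.2 G]⟩
  zero_mem' := ⟨by simp, fun G => by simp⟩
  smul_mem' c u hu := ⟨FiniteHs.smul hu.1 c, fun G => by simp [hu.2 G]⟩

lemma memHs.sub {s : ℝ} {u v : Coeff d} (hu : memHs s u) (hv : memHs s v) : memHs s (u - v) :=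
  (sobolevSpace d s).sub_mem hu hv

lemma FiniteHs.gnormSq_mul {s : ℝ} {u : Coeff d} (hu : FiniteHs s u) :
    FiniteHs (s - 2) fun G => (gnormSq G : ℂ) * u G := by
  refine .of_nonneg_of_le (fun G => ?_) (fun G => ?_) hu
  · have := one_add_gnormSq_pos G
    positivity
  · have hp := one_add_gnormSq_pos G
    have hg := gnormSq_nonneg G
    rw [norm_mul, Complex.norm_real, Real.norm_of_nonneg hg, mul_pow, ← mul_assoc]
    gcongr
    calc (1 + gnormSq G) ^ (s - 2) * gnormSq G ^ 2
        ≤ (1 + gnormSq G) ^ (s - 2) * (1 + gnormSq G) ^ 2 := by gcongr; linarith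
      _ = (1 + gnormSq G) ^ s := by
        rw [← Real.rpow_natCast, ← Real.rpow_add hp, Nat.cast_two, sub_add_cancel]

lemma FiniteHs.summable_norm_mul_norm {s : ℝ} {u v : Coeff d} (hu : FiniteHs (-s) u)
    (hv : FiniteHs s v) : Summable fun G => ‖u G‖ * ‖v G‖ := by
  simpa only [norm_bessel_neg_mul_norm_bessel] using summable_mul_of_summable_sq
    (finiteHs_iff_summable_sq_bessel.1 hu) (finiteHs_iff_summable_sq_bessel.1 hv)

lemma summable_norm_sum_smul_basis_rpow {ι E : Type*} [Fintype ι] [NormedAddCommGroup E]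
    [NormedSpace ℝ E] (b : Module.Basis ι ℝ E) {r : ℝ} (hr : r < -Fintype.card ι) :
    Summable fun G : ι → ℤ => ‖∑ i, G i • b i‖ ^ r := by
  have := Module.Finite.of_basis b
  have hrank : Module.finrank ℤ (Submodule.span ℤ (Set.range b)) = Fintype.card ι := by
    rw [ZLattice.rank ℝ, Module.finrank_eq_card_basis b]
  have hlattice := ZLattice.summable_norm_rpow (Submodule.span ℤ (Set.range b)) r (by rwa [hrank])
  refine ((b.restrictScalars ℤ).equivFun.symm.toEquiv.summable_iff.2 hlattice).congr fun G => ?_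
  simp [Module.Basis.equivFun_symm_apply]

lemma summable_one_add_gnormSq_rpow_neg {σ : ℝ} (hσ : (d : ℝ) / 2 < σ) :
    Summable fun G : Idx d => (1 + gnormSq G) ^ (-σ) := by
  let b := (EuclideanSpace.basisFun (Fin d) ℝ).toBasis
  have norm_sq_sum (G : Idx d) : ‖∑ i, G i • b i‖ ^ 2 = gnormSq G := by
    simp [b, EuclideanSpace.norm_sq_eq, gnormSq, Pi.single_apply]
  have hlattice := summable_norm_sum_smul_basis_rpow b (r := -(2 * σ))
    (by rw [Fintype.card_fin]; linarith)
  refine hlattice.of_norm_bounded_eventually ?_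
  filter_upwards [(Set.finite_singleton (0 : Idx d)).compl_mem_cofinite] with G hG
  have hG₀ : 0 < gnormSq G := by
    obtain ⟨i, hi⟩ := Function.ne_iff.1 hG
    exact Finset.sum_pos' (fun _ _ => sq_nonneg _)
      ⟨i, Finset.mem_univ i, sq_pos_of_ne_zero (Int.cast_ne_zero.2 hi)⟩
  have hσ₀ : 0 < σ := lt_of_le_of_lt (by positivity) hσ
  have hpow : ‖∑ i, G i • b i‖ ^ (-(2 * σ)) = gnormSq G ^ (-σ) := by
    rw [← norm_sq_sum, ← Real.rpow_natCast_mul (norm_nonneg _), Nat.cast_two, mul_neg]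
  rw [hpow, Real.norm_of_nonneg (Real.rpow_nonneg (one_add_gnormSq_pos G).le _)]
  exact Real.rpow_le_rpow_of_nonpos hG₀ (by linarith) (by linarith)

/-- The constant sequence is the Dirac comb, which lies in `H_p^{-σ}`, the dual of `H_p^σ`. -/
lemma FiniteHs.summable_norm {σ : ℝ} (hσ : (d : ℝ) / 2 < σ) {V : Coeff d} (hV : FiniteHs σ V) :
    Summable fun G => ‖V G‖ := by
  have hcomb : FiniteHs (-σ) (1 : Coeff d) := by
    simpa [FiniteHs] using summable_one_add_gnormSq_rpow_neg hσ
  simpa using hcomb.summable_norm_mul_norm hV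

/-! ### The duality pairing -/

lemma conj_l2inner (u v : Coeff d) : starRingEnd ℂ (l2inner u v) = l2inner v u := by
  simp only [l2inner, Complex.conj_tsum, map_mul, Complex.conj_conj, mul_comm]

lemma FiniteHs.summable_conj_mul {s : ℝ} {u v : Coeff d} (hu : FiniteHs (-s) u)
    (hv : FiniteHs s v) : Summable fun G => starRingEnd ℂ (u G) * v G :=
  .of_norm <| by simpa using hu.summable_norm_mul_norm hv

lemma norm_l2inner_le {s : ℝ} {u v : Coeff d} (hu : FiniteHs (-s) u) (hv : FiniteHs s v) :
    ‖l2inner u v‖ ≤ hsNorm (-s) u * hsNorm s v := by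
  have hpair : ‖l2inner u v‖ ≤ ∑' G, ‖u G‖ * ‖v G‖ := by
    simpa [l2inner] using norm_tsum_le_tsum_norm (hu.summable_conj_mul hv).norm
  rw [hsNorm, hsNorm, ← Real.sqrt_mul (hsNormSq_nonneg _ _)]
  refine hpair.trans (Real.le_sqrt_of_sq_le ?_)
  simpa only [norm_bessel_neg_mul_norm_bessel, ← hsNormSq_eq_tsum_sq_bessel] using
    sq_tsum_mul_le (finiteHs_iff_summable_sq_bessel.1 hu) (finiteHs_iff_summable_sq_bessel.1 hv)

lemma l2inner_add_left {s : ℝ} {u v w : Coeff d} (hu : FiniteHs (-s) u) (hv : FiniteHs (-s) v)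
    (hw : FiniteHs s w) : l2inner (u + v) w = l2inner u w + l2inner v w := by
  rw [l2inner, l2inner, l2inner, ← (hu.summable_conj_mul hw).tsum_add (hv.summable_conj_mul hw)]
  simp only [Pi.add_apply, map_add, add_mul]

lemma l2inner_sub_left {s : ℝ} {u v w : Coeff d} (hu : FiniteHs (-s) u) (hv : FiniteHs (-s) v)
    (hw : FiniteHs s w) : l2inner (u - v) w = l2inner u w - l2inner v w := by
  rw [l2inner, l2inner, l2inner, ← (hu.summable_conj_mul hw).tsum_sub (hv.summable_conj_mul hw)]
  simp only [Pi.sub_apply, map_sub, sub_mul]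

lemma l2inner_smul_left (c : ℝ) (u v : Coeff d) : l2inner (c • u) v = c * l2inner u v := by
  simp only [l2inner, Pi.smul_apply, Complex.real_smul, map_mul, Complex.conj_ofReal, mul_assoc,
    tsum_mul_left]

/-- `(1 - Δ)^s r` is the Riesz representative in `H_p^{-s}` of the functional `(r, ·)`. -/
lemma l2inner_bessel_self (s : ℝ) (r : Coeff d) : l2inner r (bessel (2 * s) r) = hsNormSq s r := by
  rw [l2inner, hsNormSq, Complex.ofReal_tsum]
  refine tsum_congr fun G => ?_
  rw [bessel, mul_div_cancel_left₀ s two_ne_zero, mul_left_comm, Complex.conj_mul']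
  push_cast
  rfl

/-! ### Truncation to an index set -/

lemma proj_mem_pwSpace (𝔾 : Set (Idx d)) (u : Coeff d) : proj 𝔾 u ∈ pwSpace 𝔾 :=
  fun _ hG => if_neg hG

lemma bessel_mem_pwSpace {𝔾 : Set (Idx d)} {u : Coeff d} (hu : u ∈ pwSpace 𝔾) (s : ℝ) :
    bessel s u ∈ pwSpace 𝔾 := fun G hG => by
  rw [bessel, hu G hG, mul_zero]

lemma sub_mem_pwSpace {𝔾 : Set (Idx d)} {u v : Coeff d} (hu : u ∈ pwSpace 𝔾)
    (hv : v ∈ pwSpace 𝔾) : u - v ∈ pwSpace 𝔾 := fun G hG => by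
  rw [Pi.sub_apply, hu G hG, hv G hG, sub_zero]

lemma FiniteHs.proj {s : ℝ} {u : Coeff d} (hu : FiniteHs s u) (𝔾 : Set (Idx d)) :
    FiniteHs s (proj 𝔾 u) :=
  (Summable.indicator hu 𝔾).congr fun G => by
    by_cases hG : G ∈ 𝔾 <;> simp [APW.proj, hG]

lemma IsRealValued.proj {u : Coeff d} (hu : IsRealValued u) {𝔾 : Set (Idx d)} (h𝔾 : 𝔾 = -𝔾) :
    IsRealValued (proj 𝔾 u) := fun G => by
  have hG : -G ∈ 𝔾 ↔ G ∈ 𝔾 := by rw [← Set.mem_neg, ← h𝔾]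
  by_cases h : G ∈ 𝔾 <;> simp [APW.proj, hG, h, hu G]

lemma l2inner_proj_left {𝔾 : Set (Idx d)} (u : Coeff d) {v : Coeff d} (hv : v ∈ pwSpace 𝔾) :
    l2inner (proj 𝔾 u) v = l2inner u v :=
  tsum_congr fun G => by
    by_cases hG : G ∈ 𝔾
    · rw [proj, if_pos hG]
    · rw [hv G hG, mul_zero, mul_zero]

/-! ### Multiplication by the potential -/

section Potential

variable {V u v w : Coeff d}

/-- The Fourier coefficients of `Lu = -Δu + Vu`. -/
def schrodinger (V u : Coeff d) : Coeff d :=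
  (fun G => (gnormSq G : ℂ) * u G) + mulCoeff V u

lemma mulCoeff_smul (V : Coeff d) (c : ℝ) (u : Coeff d) :
    mulCoeff V (c • u) = c • mulCoeff V u := by
  ext G
  simp only [mulCoeff, Pi.smul_apply, Complex.real_smul, mul_left_comm _ (c : ℂ), tsum_mul_left]

lemma IsRealValued.mulCoeff (hV : IsRealValued V) (hu : IsRealValued u) :
    IsRealValued (mulCoeff V u) := fun G => by
  rw [APW.mulCoeff, APW.mulCoeff, map_mul, Complex.conj_ofReal, Complex.conj_tsum,
    ← (Equiv.neg (Idx d)).tsum_eq]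
  congr 2 with G'
  rw [Equiv.neg_apply, ← neg_sub', hV, hu, map_mul]

lemma IsRealValued.schrodinger (hV : IsRealValued V) (hu : IsRealValued u) :
    IsRealValued (schrodinger V u) := fun G => by
  simp only [APW.schrodinger, Pi.add_apply, gnormSq_neg, hu G, hV.mulCoeff hu G, map_add, map_mul,
    Complex.conj_ofReal]

lemma aForm_smul_left (V : Coeff d) (c : ℝ) (u v : Coeff d) :
    aForm V (c • u) v = c * aForm V u v := by
  simp only [aForm, mulCoeff_smul, l2inner_smul_left, mul_add, ← tsum_mul_left, Pi.smul_apply,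
    Complex.real_smul, map_mul, Complex.conj_ofReal, mul_assoc, mul_left_comm _ (c : ℂ)]

section AbsolutelySummable

variable (hV : Summable fun G => ‖V G‖)
include hV

lemma FiniteHs.summable_norm_convolution (hu : FiniteHs 0 u) (G : Idx d) :
    Summable fun G' => ‖V (G - G') * u G'‖ := by
  simpa only [norm_mul] using
    summable_convolution (fun _ => norm_nonneg _) hV (finiteHs_zero_iff.1 hu) G

lemma FiniteHs.mulCoeff (hu : FiniteHs 0 u) : FiniteHs 0 (mulCoeff V u) := by
  have hYoung := summable_sq_convolution (fun _ => norm_nonneg _) hV (finiteHs_zero_iff.1 hu)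
  refine finiteHs_zero_iff.2 (.of_nonneg_of_le (fun G => sq_nonneg _) (fun G => ?_)
    (hYoung.mul_left ((√((2 * Real.pi) ^ d))⁻¹ ^ 2)))
  rw [APW.mulCoeff, norm_mul, mul_pow, Complex.norm_real, Real.norm_eq_abs, sq_abs]
  gcongr
  simpa only [norm_mul] using norm_tsum_le_tsum_norm (hu.summable_norm_convolution hV G)

lemma mulCoeff_add (hu : FiniteHs 0 u) (hv : FiniteHs 0 v) :
    mulCoeff V (u + v) = mulCoeff V u + mulCoeff V v := by
  ext G
  simp only [mulCoeff, Pi.add_apply, mul_add]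
  rw [(hu.summable_norm_convolution hV G).of_norm.tsum_add
    (hv.summable_norm_convolution hV G).of_norm, mul_add]

lemma l2inner_mulCoeff_left (hVreal : IsRealValued V) (hu : FiniteHs 0 u) (hv : FiniteHs 0 v) :
    l2inner (mulCoeff V u) v = l2inner u (mulCoeff V v) := by
  let c : ℂ := ((√((2 * Real.pi) ^ d))⁻¹ : ℝ)
  let k (G G' : Idx d) : ℂ := starRingEnd ℂ (V (G - G')) * starRingEnd ℂ (u G') * v G
  have hk : Summable (Function.uncurry k) := .of_norm <| by
    simpa only [k, Function.uncurry_def, norm_mul, RCLike.norm_conj] using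
      summable_convolution_kernel_mul (fun _ => norm_nonneg _) (fun _ => norm_nonneg _)
        (fun _ => norm_nonneg _) hV (finiteHs_zero_iff.1 hu) (finiteHs_zero_iff.1 hv)
  have hleft : l2inner (mulCoeff V u) v = c * ∑' G, ∑' G', k G G' := by
    simp only [l2inner, mulCoeff, k, c, map_mul, Complex.conj_ofReal, Complex.conj_tsum,
      mul_assoc (Complex.ofReal _), tsum_mul_left, ← tsum_mul_right]
  have hright : l2inner u (mulCoeff V v) = c * ∑' G', ∑' G, k G G' := by
    rw [l2inner, ← tsum_mul_left]
    refine tsum_congr fun G' => ?_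
    rw [mulCoeff, mul_left_comm, ← tsum_mul_left]
    congr with G
    rw [← neg_sub, hVreal]
    ring
  rw [hleft, hright, hk.tsum_comm]

/-! ### The energy form -/

lemma FiniteHs.schrodinger (hu : FiniteHs 1 u) : FiniteHs (-1) (schrodinger V u) :=
  (hu.gnormSq_mul.mono (by norm_num)).add
    (((hu.mono zero_le_one).mulCoeff hV).mono (by norm_num))

lemma schrodinger_add (hu : FiniteHs 1 u) (hv : FiniteHs 1 v) :
    schrodinger V (u + v) = schrodinger V u + schrodinger V v := by
  rw [schrodinger, mulCoeff_add hV (hu.mono zero_le_one) (hv.mono zero_le_one)]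
  ext G
  simp only [schrodinger, Pi.add_apply]
  ring

lemma aForm_eq_l2inner (hu : FiniteHs 1 u) (hv : FiniteHs 1 v) :
    aForm V u v = l2inner (schrodinger V u) v := by
  rw [schrodinger, l2inner_add_left (hu.gnormSq_mul.mono (by norm_num))
    (((hu.mono zero_le_one).mulCoeff hV).mono (by norm_num)) hv, aForm]
  simp only [l2inner, map_mul, Complex.conj_ofReal]

lemma aForm_add_left (hu : FiniteHs 1 u) (hv : FiniteHs 1 v) (hw : FiniteHs 1 w) :
    aForm V (u + v) w = aForm V u w + aForm V v w := by
  rw [aForm_eq_l2inner hV (hu.add hv) hw, aForm_eq_l2inner hV hu hw, aForm_eq_l2inner hV hv hw,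
    schrodinger_add hV hu hv, l2inner_add_left (hu.schrodinger hV) (hv.schrodinger hV) hw]

lemma aForm_sub_left (hu : FiniteHs 1 u) (hv : FiniteHs 1 v) (hw : FiniteHs 1 w) :
    aForm V (u - v) w = aForm V u w - aForm V v w := by
  rw [eq_sub_iff_add_eq, ← aForm_add_left hV (hu.sub hv) hv hw, sub_add_cancel]

end AbsolutelySummable

/-- The squared `L²` norm of the gradient. -/
def gradNormSq (u : Coeff d) : ℝ := ∑' G, gnormSq G * ‖u G‖ ^ 2

lemma gradNormSq_nonneg (u : Coeff d) : 0 ≤ gradNormSq u :=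
  tsum_nonneg fun G => mul_nonneg (gnormSq_nonneg G) (sq_nonneg _)

lemma l2NormSq_nonneg (u : Coeff d) : 0 ≤ l2NormSq u :=
  tsum_nonneg fun _ => sq_nonneg _

lemma hsNormSq_one (hu : FiniteHs 1 u) : hsNormSq 1 u = l2NormSq u + gradNormSq u := by
  have hu₀ : Summable fun G => ‖u G‖ ^ 2 := finiteHs_zero_iff.1 (hu.mono zero_le_one)
  have hgrad : Summable fun G => gnormSq G * ‖u G‖ ^ 2 :=
    (Summable.sub hu hu₀).congr fun G => by rw [Real.rpow_one]; ring
  rw [l2NormSq, gradNormSq, ← hu₀.tsum_add hgrad]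
  simp only [hsNormSq, Real.rpow_one, one_add_mul]

lemma re_aForm_self (V u : Coeff d) :
    (aForm V u u).re = gradNormSq u + (l2inner (mulCoeff V u) u).re := by
  have hgrad : ∑' G, (gnormSq G : ℂ) * starRingEnd ℂ (u G) * u G = gradNormSq u := by
    simp only [gradNormSq, mul_assoc, Complex.conj_mul', Complex.ofReal_tsum, Complex.ofReal_mul,
      Complex.ofReal_pow]
  rw [aForm, hgrad, Complex.add_re, Complex.ofReal_re]

section Bounds

variable {ν₁ ν₂ : ℝ} (hVb : PotentialBounds V ν₁ ν₂)
include hVb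

lemma PotentialBounds.min_mul_hsNormSq_le (hu : memHs 1 u) :
    min ν₁ 1 * hsNormSq 1 u ≤ (aForm V u u).re := by
  rw [hsNormSq_one hu.1, re_aForm_self, mul_add, add_comm]
  exact add_le_add (mul_le_of_le_one_left (gradNormSq_nonneg u) (min_le_right _ _))
    ((mul_le_mul_of_nonneg_right (min_le_left _ _) (l2NormSq_nonneg u)).trans
      (hVb u (hu.mono zero_le_one)).1)

lemma PotentialBounds.re_aForm_self_le (hu : memHs 1 u) :
    (aForm V u u).re ≤ max ν₂ 1 * hsNormSq 1 u := by
  rw [hsNormSq_one hu.1, re_aForm_self, mul_add, add_comm]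
  exact add_le_add ((hVb u (hu.mono zero_le_one)).2.trans
      (mul_le_mul_of_nonneg_right (le_max_left _ _) (l2NormSq_nonneg u)))
    (le_mul_of_one_le_left (gradNormSq_nonneg u) (le_max_right _ _))

variable (hν₁ : 0 ≤ ν₁)
include hν₁

lemma PotentialBounds.re_aForm_self_nonneg (hu : memHs 1 u) : 0 ≤ (aForm V u u).re :=
  (mul_nonneg (le_min hν₁ zero_le_one) (hsNormSq_nonneg 1 u)).trans (hVb.min_mul_hsNormSq_le hu)

lemma PotentialBounds.aNorm_sq (hu : memHs 1 u) : aNorm V u ^ 2 = (aForm V u u).re :=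
  Real.sq_sqrt (hVb.re_aForm_self_nonneg hν₁ hu)

end Bounds

lemma aNormT_sq {N : ℕ} (V : Coeff d) (W : Fin N → Coeff d) :
    aNormT V W ^ 2 = ∑ i, aNorm V (W i) ^ 2 :=
  Real.sq_sqrt (Finset.sum_nonneg fun _ _ => sq_nonneg _)

section Symmetric

variable (hV : Summable fun G => ‖V G‖) (hVreal : IsRealValued V)
include hV hVreal

lemma conj_aForm (hu : FiniteHs 0 u) (hv : FiniteHs 0 v) :
    starRingEnd ℂ (aForm V u v) = aForm V v u := by
  rw [aForm, aForm, map_add, conj_l2inner, l2inner_mulCoeff_left hV hVreal hv hu]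
  simp only [Complex.conj_tsum, map_mul, Complex.conj_conj, Complex.conj_ofReal, mul_right_comm]

lemma aForm_add_right (hu : FiniteHs 1 u) (hv : FiniteHs 1 v) (hw : FiniteHs 1 w) :
    aForm V u (v + w) = aForm V u v + aForm V u w := by
  have weaken {x : Coeff d} (hx : FiniteHs 1 x) : FiniteHs 0 x := hx.mono zero_le_one
  rw [← conj_aForm hV hVreal (weaken (hv.add hw)) (weaken hu), aForm_add_left hV hv hw hu, map_add,
    conj_aForm hV hVreal (weaken hv) (weaken hu), conj_aForm hV hVreal (weaken hw) (weaken hu)]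

lemma aForm_smul_right (c : ℝ) (hu : FiniteHs 0 u) (hv : FiniteHs 0 v) :
    aForm V u (c • v) = c * aForm V u v := by
  rw [← conj_aForm hV hVreal (hv.smul c) hu, aForm_smul_left, map_mul, Complex.conj_ofReal,
    conj_aForm hV hVreal hv hu]

/-- The form `a` on the real vector space `H_p^1`. On real-valued functions `a` is real, so
taking the real part loses nothing. -/
def energyForm : LinearMap.BilinForm ℝ (sobolevSpace d 1) :=
  LinearMap.mk₂ ℝ (fun u v => (aForm V u v).re)
    (fun u v w => by
      rw [Submodule.coe_add, aForm_add_left hV u.2.1 v.2.1 w.2.1, Complex.add_re])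
    (fun c u v => by
      rw [Submodule.coe_smul, aForm_smul_left, Complex.re_ofReal_mul, smul_eq_mul])
    (fun u v w => by
      rw [Submodule.coe_add, aForm_add_right hV hVreal u.2.1 v.2.1 w.2.1, Complex.add_re])
    (fun c u v => by
      rw [Submodule.coe_smul, aForm_smul_right hV hVreal c (FiniteHs.mono u.2.1 zero_le_one)
        (FiniteHs.mono v.2.1 zero_le_one), Complex.re_ofReal_mul, smul_eq_mul])

lemma energyForm_isSymm : LinearMap.IsSymm (energyForm hV hVreal) :=
  ⟨fun u v => by
    rw [RingHom.id_apply, energyForm, LinearMap.mk₂_apply, LinearMap.mk₂_apply,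
      ← conj_aForm hV hVreal (FiniteHs.mono u.2.1 zero_le_one) (FiniteHs.mono v.2.1 zero_le_one),
      Complex.conj_re]⟩

variable {ν₁ ν₂ : ℝ} (hVb : PotentialBounds V ν₁ ν₂) (hν₁ : 0 ≤ ν₁)
include hVb hν₁

lemma sq_re_aForm_le (hu : memHs 1 u) (hv : memHs 1 v) :
    (aForm V u v).re ^ 2 ≤ aNorm V u ^ 2 * aNorm V v ^ 2 := by
  rw [hVb.aNorm_sq hν₁ hu, hVb.aNorm_sq hν₁ hv]
  exact (energyForm hV hVreal).apply_sq_le_of_symm (fun w => hVb.re_aForm_self_nonneg hν₁ w.2)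
    (energyForm_isSymm hV hVreal) ⟨u, hu⟩ ⟨v, hv⟩

lemma aNorm_add_sq_of_orthogonal (hu : memHs 1 u) (hv : memHs 1 v) (huv : aForm V u v = 0) :
    aNorm V (u + v) ^ 2 = aNorm V u ^ 2 + aNorm V v ^ 2 := by
  have hvu : aForm V v u = 0 := by
    rw [← conj_aForm hV hVreal (FiniteHs.mono hu.1 zero_le_one)
      (FiniteHs.mono hv.1 zero_le_one), huv, map_zero]
  have huv' : memHs 1 (u + v) := (sobolevSpace d 1).add_mem hu hv
  rw [hVb.aNorm_sq hν₁ huv', hVb.aNorm_sq hν₁ hu, hVb.aNorm_sq hν₁ hv,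
    aForm_add_left hV hu.1 hv.1 huv'.1, aForm_add_right hV hVreal hu.1 hu.1 hv.1,
    aForm_add_right hV hVreal hv.1 hu.1 hv.1, huv, hvu, add_zero, zero_add, Complex.add_re]

end Symmetric

/-! ### Residuals and Galerkin solutions -/

lemma rbar_eq (V f w : Coeff d) : rbar V f w = f - schrodinger V w :=
  rfl

lemma FiniteHs.rbar {f : Coeff d} (hV : Summable fun G => ‖V G‖) (hf : FiniteHs (-1) f)
    (hw : FiniteHs 1 w) : FiniteHs (-1) (rbar V f w) :=
  hf.sub (hw.schrodinger hV)

lemma IsRealValued.rbar {f : Coeff d} (hV : IsRealValued V) (hf : IsRealValued f)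
    (hw : IsRealValued w) : IsRealValued (rbar V f w) := fun G => by
  rw [rbar_eq, Pi.sub_apply, Pi.sub_apply, map_sub, hf G, hV.schrodinger hw G]

lemma l2inner_rbar {f : Coeff d} (hV : Summable fun G => ‖V G‖) (hf : FiniteHs (-1) f)
    (hw : FiniteHs 1 w) (hv : FiniteHs 1 v) :
    l2inner (rbar V f w) v = l2inner f v - aForm V w v := by
  rw [rbar_eq, l2inner_sub_left hf (hw.schrodinger hV) hv, aForm_eq_l2inner hV hw hv]

lemma eta_sq (𝔾 : Set (Idx d)) (r : Coeff d) : eta 𝔾 r ^ 2 = hsNormSq (-1) (proj 𝔾 r) :=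
  hsNorm_sq _ _

/-- `u` solves the source problem `a(u, v) = (f, v)` for all `v ∈ V_𝔾`, with `u ∈ V_𝔾`. The
exact solution is the case `𝔾 = ℤ^d`. -/
def IsGalerkinSolution (V : Coeff d) (𝔾 : Set (Idx d)) (f u : Coeff d) : Prop :=
  u ∈ pwSpace 𝔾 ∧ memHs 1 u ∧ ∀ v ∈ pwSpace 𝔾, memHs 1 v → aForm V u v = l2inner f v

lemma isGalerkinSolution_univ_iff {f : Coeff d} : IsGalerkinSolution V Set.univ f u ↔
    memHs 1 u ∧ ∀ v, memHs 1 v → aForm V u v = l2inner f v := by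
  simp [IsGalerkinSolution, pwSpace]

lemma pwSpace_mono {𝔾 𝔾' : Set (Idx d)} (h : 𝔾 ⊆ 𝔾') : pwSpace 𝔾 ⊆ pwSpace 𝔾' :=
  fun _ hu G hG => hu G (Set.notMem_subset h hG)

section Galerkin

variable {f : Coeff d} {𝔾 𝔾' : Set (Idx d)} (hV : Summable fun G => ‖V G‖)
include hV

lemma IsGalerkinSolution.aForm_sub (hu : IsGalerkinSolution V 𝔾 f u) (hf : FiniteHs (-1) f)
    (hw : FiniteHs 1 w) (hv𝔾 : v ∈ pwSpace 𝔾) (hv : memHs 1 v) :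
    aForm V (u - w) v = l2inner (rbar V f w) v := by
  rw [aForm_sub_left hV hu.2.1.1 hw hv.1, hu.2.2 v hv𝔾 hv, l2inner_rbar hV hf hw hv.1]

lemma IsGalerkinSolution.aForm_sub_eq_zero {u' : Coeff d} (hu' : IsGalerkinSolution V 𝔾' f u')
    (hu : IsGalerkinSolution V 𝔾 f u) (h𝔾 : 𝔾 ⊆ 𝔾') (hv𝔾 : v ∈ pwSpace 𝔾) (hv : memHs 1 v) :
    aForm V (u' - u) v = 0 := by
  rw [aForm_sub_left hV hu'.2.1.1 hu.2.1.1 hv.1, hu'.2.2 v (pwSpace_mono h𝔾 hv𝔾) hv,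
    hu.2.2 v hv𝔾 hv, sub_self]

variable {ν₁ ν₂ : ℝ} (hVb : PotentialBounds V ν₁ ν₂)
include hVb

lemma IsGalerkinSolution.aNorm_sub_sq_le (hu : IsGalerkinSolution V 𝔾 f u) (hν₁ : 0 < ν₁)
    (hf : FiniteHs (-1) f) (hw𝔾 : w ∈ pwSpace 𝔾) (hw : memHs 1 w) :
    aNorm V (u - w) ^ 2 ≤ (min ν₁ 1)⁻¹ * eta 𝔾 (rbar V f w) ^ 2 := by
  set α := min ν₁ 1
  set r := rbar V f w
  set e := u - w
  have hα : 0 < α := lt_min hν₁ one_pos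
  have he : memHs 1 e := hu.2.1.sub hw
  have he𝔾 : e ∈ pwSpace 𝔾 := sub_mem_pwSpace hu.1 hw𝔾
  have hdual : aNorm V e ^ 2 ≤ eta 𝔾 r * hsNorm 1 e := by
    rw [hVb.aNorm_sq hν₁.le he, hu.aForm_sub hV hf hw.1 he𝔾 he, ← l2inner_proj_left _ he𝔾]
    exact (Complex.re_le_norm _).trans (norm_l2inner_le ((hf.rbar hV hw.1).proj 𝔾) he.1)
  have hcoercive : α * hsNorm 1 e ^ 2 ≤ aNorm V e ^ 2 := by
    rw [hsNorm_sq, hVb.aNorm_sq hν₁.le he]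
    exact hVb.min_mul_hsNormSq_le he
  have hyoung : 2 * (eta 𝔾 r * hsNorm 1 e) ≤ α⁻¹ * eta 𝔾 r ^ 2 + α * hsNorm 1 e ^ 2 := by
    have := mul_nonneg (inv_pos.2 hα).le (sq_nonneg (eta 𝔾 r - α * hsNorm 1 e))
    field_simp at this ⊢
    linarith
  linarith

lemma IsGalerkinSolution.eta_sq_le (hu : IsGalerkinSolution V 𝔾 f u) (h𝔾 : 𝔾 = -𝔾)
    (hVreal : IsRealValued V) (hν₁ : 0 ≤ ν₁) (hf : memHs (-1) f) (hw : memHs 1 w) :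
    eta 𝔾 (rbar V f w) ^ 2 ≤ max ν₂ 1 * aNorm V (u - w) ^ 2 := by
  set p := APW.proj 𝔾 (rbar V f w)
  set z := bessel (2 * -1) p
  have hp : FiniteHs (-1) p := (FiniteHs.rbar hV hf.1 hw.1).proj 𝔾
  have hz𝔾 : z ∈ pwSpace 𝔾 := bessel_mem_pwSpace (proj_mem_pwSpace 𝔾 _) _
  have hz : memHs 1 z := ⟨finiteHs_bessel.2 (hp.mono (by norm_num)),
    ((hVreal.rbar hf.2 hw.2).proj h𝔾).bessel _⟩
  have hznorm : hsNormSq 1 z = hsNormSq (-1) p := by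
    rw [hsNormSq_bessel]
    norm_num
  have hpair : (aForm V (u - w) z).re = hsNormSq (-1) p := by
    rw [hu.aForm_sub hV hf.1 hw.1 hz𝔾 hz, ← l2inner_proj_left _ hz𝔾, l2inner_bessel_self,
      Complex.ofReal_re]
  have hzle : aNorm V z ^ 2 ≤ max ν₂ 1 * hsNormSq (-1) p := by
    rw [hVb.aNorm_sq hν₁ hz, ← hznorm]
    exact hVb.re_aForm_self_le hz
  have hCS : hsNormSq (-1) p * hsNormSq (-1) p ≤
      max ν₂ 1 * aNorm V (u - w) ^ 2 * hsNormSq (-1) p := by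
    calc hsNormSq (-1) p * hsNormSq (-1) p
        ≤ aNorm V (u - w) ^ 2 * aNorm V z ^ 2 := by
          rw [← sq, ← hpair]
          exact sq_re_aForm_le hV hVreal hVb hν₁ (hu.2.1.sub hw) hz
      _ ≤ aNorm V (u - w) ^ 2 * (max ν₂ 1 * hsNormSq (-1) p) := by gcongr
      _ = max ν₂ 1 * aNorm V (u - w) ^ 2 * hsNormSq (-1) p := by ring
  rw [eta_sq]
  rcases (hsNormSq_nonneg (-1) p).eq_or_lt with h | h
  · rw [← h]
    positivity
  · exact le_of_mul_le_mul_right hCS h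

lemma IsGalerkinSolution.aNorm_sub_sq_eq {u' : Coeff d} (hu' : IsGalerkinSolution V 𝔾' f u')
    (hu : IsGalerkinSolution V 𝔾 f u) (h𝔾 : 𝔾 ⊆ 𝔾') (hVreal : IsRealValued V) (hν₁ : 0 ≤ ν₁)
    (hw𝔾 : w ∈ pwSpace 𝔾) (hw : memHs 1 w) :
    aNorm V (u' - w) ^ 2 = aNorm V (u' - u) ^ 2 + aNorm V (u - w) ^ 2 := by
  have horth : aForm V (u' - u) (u - w) = 0 :=
    hu'.aForm_sub_eq_zero hV hu h𝔾 (sub_mem_pwSpace hu.1 hw𝔾) (hu.2.1.sub hw)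
  rw [← aNorm_add_sq_of_orthogonal hV hVreal hVb hν₁ (hu'.2.1.sub hu.2.1) (hu.2.1.sub hw) horth,
    sub_add_sub_cancel]

end Galerkin

end Potential

/-! ### The Dörfler condition -/

/-- `A = B + T` splits a squared error into the remaining part `B` and the increment `T`; `S` and
`E` are the local and global squared estimators. -/
lemma sqrt_mul_sqrt_le_of_error_reduction {A B T S E α β μ : ℝ} (hα : 0 < α) (hβ : 0 < β)
    (hμ : μ ≤ 1) (hA : A = B + T) (hreduction : B ≤ μ * A) (hupper : T ≤ α⁻¹ * S)
    (hlower : E ≤ β * A) : √((1 - μ) * α / β) * √E ≤ √S := by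
  have hμ₀ : 0 ≤ 1 - μ := sub_nonneg.2 hμ
  have hincrement : (1 - μ) * A ≤ T := by linarith
  rw [← Real.sqrt_mul (div_nonneg (mul_nonneg hμ₀ hα.le) hβ.le)]
  refine Real.sqrt_le_sqrt ?_
  calc (1 - μ) * α / β * E ≤ (1 - μ) * α / β * (β * A) := by gcongr
    _ = α * ((1 - μ) * A) := by field_simp
    _ ≤ α * (α⁻¹ * S) := mul_le_mul_of_nonneg_left (hincrement.trans hupper) hα.le
    _ = S := mul_inv_cancel_left₀ hα.ne' S

theorem statement19_general (d N : ℕ) (V : Coeff d) (ν₁ ν₂ : ℝ)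
    (hV : Summable fun G => ‖V G‖) (hVreal : IsRealValued V) (hν₁ : 0 < ν₁)
    (hVb : PotentialBounds V ν₁ ν₂) (f U W U𝔾s : Fin N → Coeff d) (hf : ∀ i, memHs (-1) (f i))
    (𝔾s : Set (Idx d)) (hU : ∀ i, IsGalerkinSolution V Set.univ (f i) (U i))
    (hU𝔾s : ∀ i, IsGalerkinSolution V 𝔾s (f i) (U𝔾s i))
    (hW : ∀ i, W i ∈ pwSpace 𝔾s ∧ memHs 1 (W i)) :
    aNormT V (U𝔾s - W) ^ 2 ≤ (min ν₁ 1)⁻¹ * ∑ i, eta 𝔾s (rbar V (f i) (W i)) ^ 2 ∧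
      ∀ μ ≤ 1, aNormT V (U - U𝔾s) ^ 2 ≤ μ * aNormT V (U - W) ^ 2 →
        √((1 - μ) * min ν₁ 1 / max ν₂ 1) * √(∑ i, eta Set.univ (rbar V (f i) (W i)) ^ 2) ≤
          √(∑ i, eta 𝔾s (rbar V (f i) (W i)) ^ 2) := by
  have hupper : aNormT V (U𝔾s - W) ^ 2 ≤
      (min ν₁ 1)⁻¹ * ∑ i, eta 𝔾s (rbar V (f i) (W i)) ^ 2 := by
    rw [aNormT_sq, Finset.mul_sum]
    exact Finset.sum_le_sum fun i _ =>
      (hU𝔾s i).aNorm_sub_sq_le hV hVb hν₁ (hf i).1 (hW i).1 (hW i).2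
  have hlower : ∑ i, eta Set.univ (rbar V (f i) (W i)) ^ 2 ≤
      max ν₂ 1 * aNormT V (U - W) ^ 2 := by
    rw [aNormT_sq, Finset.mul_sum]
    exact Finset.sum_le_sum fun i _ =>
      (hU i).eta_sq_le hV hVb Set.neg_univ.symm hVreal hν₁.le (hf i) (hW i).2
  have hpythagoras : aNormT V (U - W) ^ 2 = aNormT V (U - U𝔾s) ^ 2 + aNormT V (U𝔾s - W) ^ 2 := by
    simp only [aNormT_sq, ← Finset.sum_add_distrib]
    exact Finset.sum_congr rfl fun i _ =>
      (hU i).aNorm_sub_sq_eq hV hVb (hU𝔾s i) (Set.subset_univ _) hVreal hν₁.le (hW i).1 (hW i).2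
  exact ⟨hupper, fun μ hμ hreduction => sqrt_mul_sqrt_le_of_error_reduction
    (lt_min hν₁ one_pos) (lt_max_of_lt_right one_pos) hμ hpythagoras hreduction hupper hlower⟩

/-- Propositions 4.1 and 4.2: for nested index sets `𝔾 ⊆ 𝔾*` and
Galerkin solutions `U_𝔾`, `U_{𝔾*}` of the source system:
(i) `‖U_{𝔾*} − U_𝔾‖²_a ≤ (1/α_*) η̄²(U_𝔾;𝔾*)`;
(ii) if `‖U − U_{𝔾*}‖²_a ≤ μ‖U − U_𝔾‖²_a` with `μ ∈ (0,1)`, then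
`η̄(U_𝔾;𝔾*) ≥ θ η̄(U_𝔾)` with `θ = √((1−μ)α_*/α^*)`. -/
theorem statement19 (d N : ℕ) (hd : 1 ≤ d) (V : Coeff d) (σ ν₁ ν₂ : ℝ)
    (hσ : (d : ℝ) / 2 < σ) (hV : memHs σ V) (hν₁ : 0 < ν₁) (hν₁₂ : ν₁ ≤ ν₂)
    (hVb : PotentialBounds V ν₁ ν₂)
    (f U : Fin N → Coeff d) (hf : ∀ i, memHs 0 (f i))
    (hU : ∀ i, memHs 1 (U i) ∧ ∀ v, memHs 1 v → aForm V (U i) v = l2inner (f i) v)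
    (𝔾 𝔾s : Set (Idx d)) (h𝔾ne : 𝔾.Nonempty) (hsub : 𝔾 ⊆ 𝔾s)
    (h𝔾sym : 𝔾 = -𝔾) (h𝔾ssym : 𝔾s = -𝔾s)
    (U𝔾 U𝔾s : Fin N → Coeff d)
    (hU𝔾 : ∀ i, U𝔾 i ∈ pwSpace 𝔾 ∧ memHs 1 (U𝔾 i) ∧
      ∀ v ∈ pwSpace 𝔾, memHs 1 v → aForm V (U𝔾 i) v = l2inner (f i) v)
    (hU𝔾s : ∀ i, U𝔾s i ∈ pwSpace 𝔾s ∧ memHs 1 (U𝔾s i) ∧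
      ∀ v ∈ pwSpace 𝔾s, memHs 1 v → aForm V (U𝔾s i) v = l2inner (f i) v) :
    (aNormT V (U𝔾s - U𝔾)) ^ 2 ≤
        (min ν₁ 1)⁻¹ * ∑ i, (eta 𝔾s (rbar V (f i) (U𝔾 i))) ^ 2 ∧
      ∀ μ : ℝ, μ ∈ Set.Ioo (0 : ℝ) 1 →
        (aNormT V (U - U𝔾s)) ^ 2 ≤ μ * (aNormT V (U - U𝔾)) ^ 2 →
        Real.sqrt ((1 - μ) * min ν₁ 1 / max ν₂ 1) *
            Real.sqrt (∑ i, (eta Set.univ (rbar V (f i) (U𝔾 i))) ^ 2) ≤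
          Real.sqrt (∑ i, (eta 𝔾s (rbar V (f i) (U𝔾 i))) ^ 2) := by
  have h := statement19_general d N V ν₁ ν₂ (FiniteHs.summable_norm hσ hV.1) hV.2 hν₁ hVb f U U𝔾
    U𝔾s (fun i => (hf i).mono (by norm_num)) 𝔾s (fun i => isGalerkinSolution_univ_iff.2 (hU i))
    hU𝔾s fun i => ⟨pwSpace_mono hsub (hU𝔾 i).1, (hU𝔾 i).2.1⟩
  exact ⟨h.1, fun μ hμ => h.2 μ hμ.2.le⟩

end APW
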